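/- arXiv:2603.02189 — 2 statements merged into one kernel-verified Lean document; each statement's English description precedes it below -/
import Mathlib

section
/- Every cuboid is canonically Ramsey. That is, for all positive reals b₁,…,bₛ, letting R = {0,b₁}×⋯×{0,bₛ} ⊆ ℝˢ, there exists a positive integer n such that for every set of colours κ and every colouring χ : ℝⁿ → κ, there is a subset of ℝⁿ congruent to R that is either monochromatic or rainbow under χ. -/
/-- A copy of a configuration `C ⊆ ℝˢ` in `ℝⁿ`: the image of `C` under a
distance-preserving map `ℝˢ → ℝⁿ`. -/
def IsCopy {s n : ℕ} (C : Set (EuclideanSpace ℝ (Fin s)))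
    (X : Set (EuclideanSpace ℝ (Fin n))) : Prop :=
  ∃ f : EuclideanSpace ℝ (Fin s) → EuclideanSpace ℝ (Fin n), Isometry f ∧ X = f '' C

/-- A set `X` is monochromatic under a colouring `χ` if all its points receive
the same colour. -/
def Monochromatic {α κ : Type*} (χ : α → κ) (X : Set α) : Prop :=
  ∀ x ∈ X, ∀ y ∈ X, χ x = χ y

/-- A set `X` is rainbow under a colouring `χ` if all its points receive
pairwise distinct colours. -/
def RainbowSet {α κ : Type*} (χ : α → κ) (X : Set α) : Prop :=
  Set.InjOn χ X

/-- The cuboid `{0, b 0} × ⋯ × {0, b (s-1)} ⊆ ℝˢ`. -/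
def cuboid {s : ℕ} (b : Fin s → ℝ) : Set (EuclideanSpace ℝ (Fin s)) :=
  {x | ∀ i, x i = 0 ∨ x i = b i}

/-- A configuration is canonically Ramsey if some `ℝⁿ` admits, for every colouring
with arbitrarily many colours, a monochromatic or rainbow copy of it. -/
def CanonicallyRamsey {s : ℕ} (C : Set (EuclideanSpace ℝ (Fin s))) : Prop :=
  ∃ n : ℕ, 0 < n ∧ ∀ (κ : Type) (χ : EuclideanSpace ℝ (Fin n) → κ),
    ∃ X : Set (EuclideanSpace ℝ (Fin n)), IsCopy C X ∧ (Monochromatic χ X ∨ RainbowSet χ X)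

/-- A configuration is Ramsey if for every number of colours `r` there is `n` such
that every `r`-colouring of `ℝⁿ` admits a monochromatic copy of it. -/
def IsRamsey {s : ℕ} (C : Set (EuclideanSpace ℝ (Fin s))) : Prop :=
  ∀ r : ℕ, 0 < r → ∃ n : ℕ, ∀ χ : EuclideanSpace ℝ (Fin n) → Fin r,
    ∃ X : Set (EuclideanSpace ℝ (Fin n)), IsCopy C X ∧ Monochromatic χ X

/-!
Ramsey's theorem for pairs, applied one coordinate at a time, makes every colouring of a large
grid `[N]ᴶ` order invariant on some subbox: whether two points share a colour depends only on how
their coordinates compare. If two points that differ in the `j`-th coordinate ever share a colour,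
order invariance forces the colour to ignore that coordinate altogether. So the colouring is
*canonical* on the subbox: two points share a colour exactly when they agree on a certain set
`I ⊆ J` of coordinates.

Realise `[N]ᴶ` as a product of regular simplices with squared edge lengths `w j`. A subbox with
two values in each coordinate is then a box with mutually orthogonal edges, and adding up disjoint
groups of its edges gives cuboids with vertices in it. Such a cuboid is monochromatic if its
groups all avoid `I`, and rainbow if they all meet `I`. Hence it suffices to find weights `w` such
that, whatever `I` is, the numbers `bᵢ²` are sums of disjoint groups of weights which either all
avoid or all meet `I`.

For this, cut the `bᵢ²` into small pieces, and for each piece `ε` take a block of weights: `ε` and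
`bₗ² - ε` for every `l`. If in some block all coordinates of weight `ε` lie in `I`, the pairs
`ε + (bₗ² - ε)` of that block all meet `I`; otherwise every block has a coordinate of weight `ε`
outside `I`, and these pieces reassemble into the `bᵢ²`.
-/

open Function
open scoped Finset InnerProductSpace

universe u

section Ramsey

theorem exists_le_card_fiber_of_sum_le_card {α K : Type*} [Fintype K] [Nonempty K] [DecidableEq K]
    (f : α → K) (m : K → ℕ) {S : Finset α} (h : ∑ k, m k ≤ #S) :
    ∃ k, m k ≤ #{x ∈ S | f x = k} := by
  rw [Finset.card_eq_sum_card_fiberwise (f := f) (t := Finset.univ)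
    fun _ _ => Finset.mem_coe.2 (Finset.mem_univ _)] at h
  simpa using Finset.exists_le_of_sum_le Finset.univ_nonempty h

/-- A finite set `T` is homogeneous of colour `k` for a colouring `f` of pairs: every increasing
pair of elements of `T` receives the colour `k`. -/
def IsHomogeneous {α K : Type*} [LT α] (f : α → α → K) (k : K) (T : Finset α) : Prop :=
  ∀ x ∈ T, ∀ y ∈ T, x < y → f x y = k

theorem IsHomogeneous.insert {α K : Type*} [LinearOrder α] {f : α → α → K} {k : K} {T : Finset α}
    (hT : IsHomogeneous f k T) {a : α} (ha_lt : ∀ x ∈ T, a < x) (hfa : ∀ x ∈ T, f a x = k) :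
    IsHomogeneous f k (insert a T) := by
  intro x hx y hy hxy
  rcases Finset.mem_insert.1 hx with rfl | hxT <;> rcases Finset.mem_insert.1 hy with rfl | hyT
  · exact absurd hxy (lt_irrefl _)
  · exact hfa y hyT
  · exact absurd hxy (ha_lt x hxT).not_gt
  · exact hT x hxT y hyT hxy

theorem exists_homogeneous_finset {K : Type*} [Finite K] (n : K → ℕ) :
    ∃ N : ℕ, ∀ {α : Type u} [LinearOrder α] (f : α → α → K) (S : Finset α), N ≤ #S →
      ∃ k, ∃ T ⊆ S, #T = n k ∧ IsHomogeneous f k T := by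
  classical
  have := Fintype.ofFinite K
  induction h : ∑ k, n k using Nat.strong_induction_on generalizing n with
  | _ _ ih =>
  by_cases h0 : ∃ k, n k = 0
  · obtain ⟨k, hk⟩ := h0
    exact ⟨0, fun f S _ => ⟨k, ∅, by simp [hk, IsHomogeneous]⟩⟩
  replace h0 : ∀ k, n k ≠ 0 := not_exists.1 h0
  have hdecr (k : K) : ∑ i, update n k (n k - 1) i < ∑ i, n i :=
    Finset.sum_lt_sum (fun i _ => by rcases eq_or_ne i k with rfl | hi <;> simp [*])
      ⟨k, Finset.mem_univ k, by simpa using Nat.pos_of_ne_zero (h0 k)⟩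
  choose M hM using fun k => ih _ (h ▸ hdecr k) (update n k (n k - 1)) rfl
  refine ⟨∑ k, M k + 1, fun f S hS => ?_⟩
  have hne : S.Nonempty := Finset.card_pos.1 (by omega)
  set a := S.min' hne
  have haS : a ∈ S := S.min'_mem hne
  have : Nonempty K := ⟨f a a⟩
  obtain ⟨k, hk⟩ := exists_le_card_fiber_of_sum_le_card (f a) M (S := S.erase a)
    (by rw [Finset.card_erase_of_mem haS]; omega)
  obtain ⟨i, T, hTS, hTcard, hT⟩ := hM k f _ hk
  have hTS' : T ⊆ S.erase a := hTS.trans (Finset.filter_subset _ _)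
  rcases eq_or_ne i k with rfl | hik
  · refine ⟨i, insert a T, ?_, ?_, ?_⟩
    · exact Finset.insert_subset haS (hTS'.trans (S.erase_subset a))
    · rw [Finset.card_insert_of_notMem fun ha => S.notMem_erase a (hTS' ha), hTcard, update_self]
      exact Nat.sub_one_add_one (h0 i)
    · exact hT.insert (fun x hx => S.min'_lt_of_mem_erase_min' hne (hTS' hx))
        fun x hx => (Finset.mem_filter.1 (hTS hx)).2
  · exact ⟨i, T, hTS'.trans (S.erase_subset a), by simpa [hik] using hTcard, hT⟩

theorem exists_homogeneous_orderEmbedding (n : ℕ) (K : Type*) [Finite K] :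
    ∃ N : ℕ, ∀ f : Fin N → Fin N → K, ∃ t : Fin n ↪o Fin N, ∃ k,
      ∀ u v, u < v → f (t u) (t v) = k := by
  obtain ⟨N, hN⟩ := exists_homogeneous_finset fun _ : K => n
  refine ⟨N, fun f => ?_⟩
  obtain ⟨k, T, -, hTcard, hT⟩ := hN f Finset.univ (by simp)
  exact ⟨T.orderEmbOfFin hTcard, k, fun u v huv => hT _ (T.orderEmbOfFin_mem _ _) _
    (T.orderEmbOfFin_mem _ _) ((T.orderEmbOfFin hTcard).strictMono huv)⟩

theorem exists_homogeneous_box (n : ℕ) (J : Type u) [Finite J] (K : Type*) [Finite K] :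
    ∃ N : ℕ, ∀ F : (J → Fin N) → (J → Fin N) → K, ∃ t : J → Fin n ↪o Fin N, ∃ k,
      ∀ u v : J → Fin n, (∀ j, u j < v j) →
        F (fun j => t j (u j)) (fun j => t j (v j)) = k := by
  induction J using Finite.induction_empty_option with
  | of_equiv e ih =>
    obtain ⟨N, hN⟩ := ih
    refine ⟨N, fun F => ?_⟩
    obtain ⟨t, k, hk⟩ := hN fun p q => F (p ∘ e.symm) (q ∘ e.symm)
    refine ⟨t ∘ e.symm, k, fun u v huv => ?_⟩
    simpa [comp_def] using hk (u ∘ e) (v ∘ e) fun j => huv (e j)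
  | h_empty =>
    exact ⟨0, fun F => ⟨fun j => j.elim, F (fun j => j.elim) (fun j => j.elim), fun u v _ =>
      congrArg₂ F (Subsingleton.elim _ _) (Subsingleton.elim _ _)⟩⟩
  | @h_option J _ ih =>
    obtain ⟨N, hN⟩ := ih
    obtain ⟨M, hM⟩ := exists_homogeneous_orderEmbedding n ((J → Fin N) → (J → Fin N) → K)
    let ιN : Fin N ↪o Fin (max N M) := Fin.castLEOrderEmb (le_max_left N M)
    let ιM : Fin M ↪o Fin (max N M) := Fin.castLEOrderEmb (le_max_right N M)
    let point (x : Fin M) (p : J → Fin N) : Option J → Fin (max N M)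
      | none => ιM x
      | some j => ιN (p j)
    refine ⟨max N M, fun F => ?_⟩
    obtain ⟨t₀, G, hG⟩ := hM fun x y p q => F (point x p) (point y q)
    obtain ⟨t, k, hk⟩ := hN G
    let t' (j : Option J) : Fin n ↪o Fin (max N M) :=
      j.elim (t₀.trans ιM) fun j => (t j).trans ιN
    have hpoint (u : Option J → Fin n) :
        (fun j => t' j (u j)) = point (t₀ (u none)) fun j => t j (u (some j)) := by
      funext j
      cases j <;> rfl
    refine ⟨t', k, fun u v huv => ?_⟩
    rw [hpoint, hpoint, ← hk _ _ fun j => huv (some j), ← hG _ _ (huv none)]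

end Ramsey

section Canonical
variable {J : Type u} {κ : Type*}

/-- A colouring of the grid `αᴶ` is order invariant if whether two points share a colour depends
only on how their coordinates compare. -/
def OrderInvariant {α : Type*} [LinearOrder α] (C : (J → α) → κ) : Prop :=
  ∀ g h g' h', (∀ j, cmp (g j) (h j) = cmp (g' j) (h' j)) → (C g = C h ↔ C g' = C h')

theorem exists_orderInvariant_box (n : ℕ) (J : Type u) [Finite J] :
    ∃ N : ℕ, ∀ {κ : Type*} (c : (J → Fin N) → κ), ∃ t : J → Fin n ↪o Fin N,
      OrderInvariant fun g : J → Fin n => c fun j => t j (g j) := by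
  classical
  obtain ⟨N, hN⟩ := exists_homogeneous_box (n + 1) J (Set J → Set J → Prop)
  refine ⟨N, fun c => ?_⟩
  obtain ⟨t, E, hE⟩ := hN fun p q A B => c (A.piecewise q p) = c (B.piecewise q p)
  let t' (j : J) : Fin n ↪o Fin N := Fin.castSuccOrderEmb.trans (t j)
  -- The spare value `Fin.last n` lets equal coordinates be the lower end of a strict pair.
  have heq_iff (g h : J → Fin n) : (c fun j => t' j (g j)) = (c fun j => t' j (h j)) ↔
      E {j | h j < g j} {j | g j < h j} := by
    rw [← hE (fun j => (min (g j) (h j)).castSucc)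
      (fun j => if g j = h j then Fin.last n else (max (g j) (h j)).castSucc) fun j => by
        split_ifs with hj <;> grind]
    congr! 2 <;> funext j <;> rcases lt_trichotomy (g j) (h j) with hj | hj | hj <;>
      simp [t', Set.piecewise, hj, hj.le, hj.not_gt, ne_of_lt, ne_of_gt]
  refine ⟨t', fun g h g' h' hcmp => ?_⟩
  have hlt (j : J) : g j < h j ↔ g' j < h' j := by
    rw [← cmp_eq_lt_iff, hcmp, cmp_eq_lt_iff]
  have hgt (j : J) : h j < g j ↔ h' j < g' j := by
    rw [← cmp_eq_gt_iff, hcmp, cmp_eq_gt_iff]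
  simp only [heq_iff, hlt, hgt]

theorem dependsOn_of_update_eq [DecidableEq J] [Finite J] {α : J → Type*} {C : (∀ j, α j) → κ}
    {I : Set J} (h : ∀ j ∉ I, ∀ g x, C (update g j x) = C g) : DependsOn C I := by
  classical
  have := Fintype.ofFinite J
  intro g g' hg
  have key (S : Finset J) : C (S.piecewise g' g) = C g := by
    induction S using Finset.induction_on with
    | empty => simp
    | insert j S hj ih =>
      rw [Finset.piecewise_insert]
      by_cases hjI : j ∈ I
      · rwa [← hg j hjI, update_eq_self_iff.2 (by simp [hj])]
      · rw [h j hjI, ih]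
  simpa using (key Finset.univ).symm

variable {α : Type*} [LinearOrder α] {C : (J → α) → κ}

theorem OrderInvariant.update_eq [DecidableEq J] (hC : OrderInvariant C) {a b d : α}
    (hab : a < b) (hbd : b < d) {g h : J → α} {j : J} (hgh : C g = C h) (hj : g j < h j)
    (f : J → α) (x : α) : C (update f j x) = C f := by
  have hupdate {y z : α} (hyz : y < z) : C (update g j y) = C (update h j z) := by
    refine (hC _ _ _ _ fun i => ?_).1 hgh
    rcases eq_or_ne i j with rfl | hi
    · simp [hj.cmp_eq_lt, hyz.cmp_eq_lt]
    · simp [hi]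
  have hbd_eq : C (update h j b) = C (update h j d) :=
    (hupdate hab).symm.trans (hupdate (hab.trans hbd))
  have hlt {y z : α} (hyz : y < z) : C (update f j y) = C (update f j z) := by
    refine (hC _ _ _ _ fun i => ?_).1 hbd_eq
    rcases eq_or_ne i j with rfl | hi
    · simp [hbd.cmp_eq_lt, hyz.cmp_eq_lt]
    · simp [hi]
  rcases lt_trichotomy x (f j) with hx | rfl | hx
  · simpa using hlt hx
  · simp
  · simpa using (hlt hx).symm

theorem OrderInvariant.exists_eq_iff_eqOn [Finite J] (hC : OrderInvariant C)
    {a b d : α} (hab : a < b) (hbd : b < d) :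
    ∃ I : Set J, ∀ g h, C g = C h ↔ Set.EqOn g h I := by
  classical
  refine ⟨{j | ¬∀ f x, C (update f j x) = C f}, fun g h => ⟨fun hgh j hj => ?_, fun hgh => ?_⟩⟩
  · by_contra hne
    rcases lt_or_gt_of_ne hne with hlt | hgt
    · exact hj (hC.update_eq hab hbd hgh hlt)
    · exact hj (hC.update_eq hab hbd hgh.symm hgt)
  · exact dependsOn_of_update_eq (fun j hj => not_not.1 hj) hgh

theorem exists_canonical_box (n : ℕ) (J : Type u) [Finite J] :
    ∃ N : ℕ, ∀ {κ : Type*} (c : (J → Fin N) → κ), ∃ t : J → Fin n ↪o Fin N, ∃ I : Set J,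
      ∀ g h : J → Fin n,
        (c fun j => t j (g j)) = (c fun j => t j (h j)) ↔ Set.EqOn g h I := by
  obtain ⟨N, hN⟩ := exists_orderInvariant_box (n + 3) J
  refine ⟨N, fun c => ?_⟩
  obtain ⟨t, ht⟩ := hN c
  obtain ⟨I, hI⟩ := ht.exists_eq_iff_eqOn
    (a := Fin.natAdd n 0) (b := Fin.natAdd n 1) (d := Fin.natAdd n 2) (by simp) (by simp)
  refine ⟨fun j => (Fin.castAddOrderEmb 3).trans (t j), I, fun g h => ?_⟩
  refine (hI (fun j => Fin.castAdd 3 (g j)) fun j => Fin.castAdd 3 (h j)).trans ?_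
  simp [Set.EqOn]

end Canonical

section Geometry

theorem Monochromatic.image {α β κ : Type*} {f : α → β} {χ : β → κ} {X : Set α}
    (h : Monochromatic (χ ∘ f) X) : Monochromatic χ (f '' X) := by
  rintro _ ⟨x, hx, rfl⟩ _ ⟨y, hy, rfl⟩
  exact h x hx y hy

variable {E : Type*} [NormedAddCommGroup E] [InnerProductSpace ℝ E]

theorem CanonicallyRamsey.of_finiteDimensional [FiniteDimensional ℝ E] [Nontrivial E] {s : ℕ}
    {C : Set (EuclideanSpace ℝ (Fin s))}
    (h : ∀ (κ : Type) (χ : E → κ), ∃ f : EuclideanSpace ℝ (Fin s) → E,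
      Isometry f ∧ (Monochromatic (χ ∘ f) C ∨ RainbowSet (χ ∘ f) C)) :
    CanonicallyRamsey C := by
  refine ⟨Module.finrank ℝ E, Module.finrank_pos, fun κ χ => ?_⟩
  let φ := (stdOrthonormalBasis ℝ E).repr
  obtain ⟨f, hf, hfC⟩ := h κ (χ ∘ φ)
  exact ⟨(φ ∘ f) '' C, ⟨φ ∘ f, φ.isometry.comp hf, rfl⟩,
    hfC.imp Monochromatic.image Set.InjOn.image_of_comp⟩

theorem isometry_add_sum_smul {ι : Type*} [Fintype ι] {v : ι → E} (hv : Orthonormal ℝ v) (a : E) :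
    Isometry fun x : EuclideanSpace ℝ ι => a + ∑ i, x i • v i := by
  refine (isometry_add_left a).comp (Isometry.of_dist_eq fun x y => ?_)
  rw [dist_eq_norm, EuclideanSpace.dist_eq, norm_eq_sqrt_real_inner, ← Finset.sum_sub_distrib]
  simp only [← sub_smul, hv.inner_sum, Real.dist_eq, sq_abs, conj_trivial, ← sq]

section SimplexProduct

variable {J β : Type*} {e : J × β → E} {w : J → ℝ}

/-- The vertex indexed by `g : J → β` of a product of regular simplices. The `j`-th simplex is
spanned by multiples of the vectors `e (j, ·)`; when `e` is orthonormal and `0 ≤ w j`, its edges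
have squared length `w j`. -/
noncomputable def simplexProductVertex [Fintype J] (e : J × β → E) (w : J → ℝ) (g : J → β) : E :=
  ∑ j, √(w j / 2) • e (j, g j)

/-- The edge from `t j 0` to `t j 1` in the `j`-th factor of the product of simplices whose
vertices are given by `simplexProductVertex e w`, as a vector. -/
noncomputable def simplexProductEdge (e : J × β → E) (w : J → ℝ) (t : J → Fin 2 → β) (j : J) : E :=
  √(w j / 2) • (e (j, t j 1) - e (j, t j 0))

theorem inner_simplexProductEdge [DecidableEq J] (he : Orthonormal ℝ e) (hw : ∀ j, 0 ≤ w j)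
    {t : J → Fin 2 → β} (ht : ∀ j, Injective (t j)) (i j : J) :
    ⟪simplexProductEdge e w t i, simplexProductEdge e w t j⟫_ℝ = if i = j then w i else 0 := by
  classical
  simp only [simplexProductEdge, real_inner_smul_left, real_inner_smul_right, inner_sub_left,
    inner_sub_right, orthonormal_iff_ite.1 he, Prod.mk.injEq]
  rcases eq_or_ne i j with rfl | hij
  · have hsqrt : √(w i / 2) * √(w i / 2) = w i / 2 := Real.mul_self_sqrt (by linarith [hw i])
    simp only [(ht i).eq_iff, zero_ne_one, one_ne_zero, and_false, and_self, if_true, if_false]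
    linarith
  · simp only [hij, false_and, if_false, sub_zero, mul_zero]

theorem simplexProductVertex_comp [Fintype J] (t : J → Fin 2 → β) (g : J → Fin 2) :
    simplexProductVertex e w (fun j => t j (g j)) =
      simplexProductVertex e w (fun j => t j 0) +
        ∑ j with g j = 1, simplexProductEdge e w t j := by
  rw [Finset.sum_filter, simplexProductVertex, simplexProductVertex, ← Finset.sum_add_distrib]
  refine Finset.sum_congr rfl fun j _ => ?_
  generalize g j = x
  fin_cases x <;> simp [simplexProductEdge, smul_sub]

end SimplexProduct

section Cuboid

variable {J ι : Type*} {σ : J → Option ι} {b : ι → ℝ}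

open Classical in
/-- The corner `x` of the cuboid with sides `b`, viewed as a corner of a box with sides indexed
by `J`: along the sides in the group `i` (those with `σ j = some i`) it has index `1` or `0`
according to whether `x i = b i`, and along the sides in no group it has index `0`. -/
noncomputable def cornerIndex (σ : J → Option ι) (b x : ι → ℝ) (j : J) : Fin 2 :=
  if ∃ i ∈ σ j, x i = b i then 1 else 0

theorem eqOn_cornerIndex {I : Set J} (hI : ∀ j ∈ I, σ j = none) (b x y : ι → ℝ) :
    Set.EqOn (cornerIndex σ b x) (cornerIndex σ b y) I := fun j hj => by
  simp [cornerIndex, hI j hj]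

theorem eq_of_eqOn_cornerIndex {I : Set J} (hI : ∀ i, ∃ j ∈ I, σ j = some i) {x y : ι → ℝ}
    (hx : ∀ i, x i = 0 ∨ x i = b i) (hy : ∀ i, y i = 0 ∨ y i = b i)
    (h : Set.EqOn (cornerIndex σ b x) (cornerIndex σ b y) I) : x = y := by
  funext i
  obtain ⟨j, hj, hji⟩ := hI i
  have hiff : x i = b i ↔ y i = b i := by
    have := h hj
    by_cases hxi : x i = b i <;> by_cases hyi : y i = b i <;> simp_all [cornerIndex]
  grind

variable [Fintype J] [DecidableEq ι]
variable {E : Type*} [NormedAddCommGroup E] [InnerProductSpace ℝ E] {d : J → E}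

theorem orthonormal_inv_smul_sum [DecidableEq J] {w : J → ℝ}
    (hd : ∀ i j, ⟪d i, d j⟫_ℝ = if i = j then w i else 0) (hb : ∀ i, b i ≠ 0)
    (hσ : ∀ i, ∑ j with σ j = some i, w j = b i ^ 2) :
    Orthonormal ℝ fun i => (b i)⁻¹ • ∑ j with σ j = some i, d j := by
  rw [orthonormal_iff_ite]
  intro i i'
  have hinner : ⟪∑ j with σ j = some i, d j, ∑ j with σ j = some i', d j⟫_ℝ =
      if i = i' then b i ^ 2 else 0 := by
    simp only [sum_inner, inner_sum, hd, Finset.sum_ite_eq', Finset.mem_filter, Finset.mem_univ,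
      true_and]
    rcases eq_or_ne i i' with rfl | hi
    · rw [← hσ, if_pos rfl]
      exact Finset.sum_congr rfl fun j hj => if_pos (Finset.mem_filter.1 hj).2
    · rw [if_neg hi]
      exact Finset.sum_eq_zero fun j hj => if_neg (by grind)
  rw [real_inner_smul_left, real_inner_smul_right, hinner]
  rcases eq_or_ne i i' with rfl | hi
  · simp only [if_true]
    field_simp [hb i]
  · simp [hi]

theorem sum_smul_inv_smul_sum [Fintype ι] (hb : ∀ i, b i ≠ 0) {x : ι → ℝ}
    (hx : ∀ i, x i = 0 ∨ x i = b i) :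
    ∑ i, x i • (b i)⁻¹ • ∑ j with σ j = some i, d j = ∑ j with cornerIndex σ b x j = 1, d j := by
  have hcoeff (i : ι) : x i * (b i)⁻¹ = if x i = b i then 1 else 0 := by
    rcases hx i with h | h <;> simp [h, hb i, (hb i).symm]
  simp only [smul_smul, hcoeff, Finset.sum_filter, Finset.smul_sum, smul_ite, ite_smul, one_smul,
    zero_smul, smul_zero]
  rw [Finset.sum_comm]
  refine Finset.sum_congr rfl fun j _ => ?_
  rcases hj : σ j with _ | i <;> simp [cornerIndex, hj]

theorem exists_isometry_eq_simplexProductVertex {β : Type*} {s : ℕ} {σ : J → Option (Fin s)}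
    {b : Fin s → ℝ} (hb : ∀ i, b i ≠ 0) {w : J → ℝ} (hw : ∀ j, 0 ≤ w j)
    (hσ : ∀ i, ∑ j with σ j = some i, w j = b i ^ 2) {e : J × β → E} (he : Orthonormal ℝ e)
    {t : J → Fin 2 → β} (ht : ∀ j, Injective (t j)) :
    ∃ f : EuclideanSpace ℝ (Fin s) → E, Isometry f ∧ ∀ x ∈ cuboid b,
      f x = simplexProductVertex e w fun j => t j (cornerIndex σ b x j) := by
  classical
  refine ⟨_, isometry_add_sum_smul (orthonormal_inv_smul_sum
    (inner_simplexProductEdge he hw ht) hb hσ) (simplexProductVertex e w fun j => t j 0),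
    fun x hx => ?_⟩
  rw [sum_smul_inv_smul_sum hb hx, ← simplexProductVertex_comp]

end Cuboid

end Geometry

section Splitting

variable {J ι : Type*}

/-- Weights `w` split the numbers `B` flexibly if, for every set `I` of indices, disjoint groups of
weights add up to the `B i`, with either no group meeting `I` or every group meeting `I`. The group
of the index `j` is recorded as `σ j`, with `none` standing for an unused weight. -/
def IsFlexibleSplitting [Fintype J] [DecidableEq ι] (w : J → ℝ) (B : ι → ℝ) : Prop :=
  ∀ I : Set J, ∃ σ : J → Option ι, (∀ i, ∑ j with σ j = some i, w j = B i) ∧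
    ((∀ j ∈ I, σ j = none) ∨ ∀ i, ∃ j ∈ I, σ j = some i)

theorem canonicallyRamsey_cuboid_of_isFlexibleSplitting [Fintype J] [Nonempty J] {s : ℕ}
    {b : Fin s → ℝ} (hb : ∀ i, b i ≠ 0) {w : J → ℝ} (hw : ∀ j, 0 ≤ w j)
    (hsplit : IsFlexibleSplitting w fun i => b i ^ 2) : CanonicallyRamsey (cuboid b) := by
  classical
  obtain ⟨N, hN⟩ := exists_canonical_box 2 J
  obtain ⟨j₀⟩ := ‹Nonempty J›
  obtain ⟨t₀, -⟩ := hN fun _ => ()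
  have : Nonempty (J × Fin N) := ⟨(j₀, t₀ j₀ 0)⟩
  let e := EuclideanSpace.basisFun (J × Fin N) ℝ
  refine .of_finiteDimensional (E := EuclideanSpace ℝ (J × Fin N)) fun κ χ => ?_
  obtain ⟨t, I, hI⟩ := hN fun g => χ (simplexProductVertex e w g)
  obtain ⟨σ, hσ, hIσ⟩ := hsplit I
  obtain ⟨f, hf, hfx⟩ := exists_isometry_eq_simplexProductVertex hb hw hσ e.orthonormal
    fun j => (t j).injective
  have hcolour : ∀ x ∈ cuboid b, ∀ y ∈ cuboid b, χ (f x) = χ (f y) ↔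
      Set.EqOn (cornerIndex σ b x) (cornerIndex σ b y) I := fun x hx y hy => by
    rw [hfx x hx, hfx y hy, hI]
  refine ⟨f, hf, hIσ.imp (fun hnone x hx y hy => ?_) fun hall x hx y hy hxy => ?_⟩
  · exact (hcolour x hx y hy).2 (eqOn_cornerIndex hnone b x y)
  · exact PiLp.ext (congrFun (eq_of_eqOn_cornerIndex hall hx hy ((hcolour x hx y hy).1 hxy)))

/-- The weights on blocks indexed by `A` used to split `B` flexibly: in the block `a` and for each
`i`, the number `B i` is cut into the small piece `ε a` (index `false`) and the rest. -/
def blockWeight {A : Type*} (B : ι → ℝ) (ε : A → ℝ) : A × ι × Bool → ℝ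
  | (a, _, false) => ε a
  | (a, i, true) => B i - ε a

theorem blockWeight_nonneg {A : Type*} {B : ι → ℝ} {ε : A → ℝ} (hε : ∀ a, 0 ≤ ε a)
    (hεB : ∀ a i, ε a ≤ B i) : ∀ j, 0 ≤ blockWeight B ε j
  | (a, _, false) => hε a
  | (a, i, true) => sub_nonneg.2 (hεB a i)

theorem isFlexibleSplitting_blockWeight [Fintype ι] [DecidableEq ι] {A : Type*} [Fintype A]
    {B : ι → ℝ} {ε : A → ℝ} {τ : A → ι} (hε : ∀ i, ∑ a with τ a = i, ε a = B i) :
    IsFlexibleSplitting (blockWeight B ε) B := by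
  classical
  intro I
  by_cases hI : ∃ a₀, ∀ i, (a₀, i, false) ∈ I
  · obtain ⟨a₀, ha₀⟩ := hI
    refine ⟨fun j => if j.1 = a₀ then some j.2.1 else none, fun i => ?_,
      Or.inr fun i => ⟨_, ha₀ i, if_pos rfl⟩⟩
    simp [Finset.sum_filter, Fintype.sum_prod_type, blockWeight, ite_and,
      Finset.sum_add_distrib]
  · push Not at hI
    choose d hd using hI
    refine ⟨fun j => if j.2 = (d j.1, false) then some (τ j.1) else none, fun i => ?_,
      Or.inl fun j hj => if_neg ?_⟩
    · simp [Finset.sum_filter, Fintype.sum_prod_type, blockWeight, ite_and, ← hε]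
    · rintro h
      exact hd j.1 (h ▸ hj)

theorem exists_pos_forall_div_le [Finite ι] {B : ι → ℝ} (hB : ∀ i, 0 < B i) :
    ∃ k : ℕ, 0 < k ∧ ∀ i i', B i / k ≤ B i' :=
  ((Filter.eventually_gt_atTop 0).and <| Filter.eventually_all.2 fun i =>
    Filter.eventually_all.2 fun i' =>
      (tendsto_const_div_atTop_nhds_zero_nat (B i)).eventually_le_const (hB i')).exists

theorem sum_filter_fst_eq_div [Fintype ι] [DecidableEq ι] (B : ι → ℝ) {k : ℕ} (hk : k ≠ 0)
    (i : ι) :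
    ∑ a : ι × Fin k with a.1 = i, B a.1 / k = B i := by
  simp [Finset.sum_filter, Fintype.sum_prod_type, mul_div_cancel₀, hk]

end Splitting

/-- **Every cuboid is canonically Ramsey.** For all positive reals `b₁, …, bₛ`,
the cuboid `R = {0,b₁} × ⋯ × {0,bₛ} ⊆ ℝˢ` is canonically Ramsey: there is a
positive integer `n` such that every colouring of `ℝⁿ`, with any set of colours,
admits a subset congruent to `R` which is monochromatic or rainbow. -/
theorem cuboid_canonicallyRamsey (s : ℕ) (hs : 0 < s) (b : Fin s → ℝ)
    (hb : ∀ i, 0 < b i) :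
    CanonicallyRamsey (cuboid b) := by
  have hB : ∀ i, 0 < b i ^ 2 := fun i => pow_pos (hb i) 2
  obtain ⟨k, hk, hle⟩ := exists_pos_forall_div_le hB
  have : NeZero s := ⟨hs.ne'⟩
  have : NeZero k := ⟨hk.ne'⟩
  let ε (a : Fin s × Fin k) : ℝ := b a.1 ^ 2 / k
  have hε : ∀ a, 0 ≤ ε a := fun a => div_nonneg (hB a.1).le k.cast_nonneg
  exact canonicallyRamsey_cuboid_of_isFlexibleSplitting (fun i => (hb i).ne')
    (blockWeight_nonneg hε fun a => hle a.1)
    (isFlexibleSplitting_blockWeight (sum_filter_fst_eq_div (fun i => b i ^ 2) hk.ne'))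
end

section
/- For all positive reals b₁,…,bₙ, the right-angled simplex with vertex set {0, b₁e₁, …, bₙeₙ} ⊆ ℝⁿ (where e₁,…,eₙ is the standard basis and 0 is the origin) is canonically Ramsey: there exists N such that every colouring of ℝᴺ (with arbitrarily many colours) admits a subset congruent to {0, b₁e₁, …, bₙeₙ} that is either monochromatic or rainbow. -/
/-!
The product version of Ramsey's theorem for pairs, applied to the colour patterns on the subcubes
of a grid `m^ι`, yields a `3^ι` subgrid whose subcubes all have the same pattern. Comparing
overlapping subcubes then shows that the pattern is canonical: for some `J ⊆ ι`, two vertices have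
the same colour iff they agree on `J`. A product of regular simplices is a grid `m^ι` in Euclidean
space all of whose subcubes are boxes with the same prescribed edge lengths, so every colouring of
a large Euclidean space is canonical on the vertices of one of these boxes.

The vertices of such a box given by the empty set and by pairwise disjoint sets `S k` of edges with
total squared length `b k ^ 2` form a copy of the simplex by Pythagoras. It is monochromatic if no
`S k` meets `J` and rainbow if every `S k` does. Edges are supplied so that, whatever `J` is, one of
the two can be achieved: if many pieces of `b i ^ 2` are in `J`, each `S k` takes one of them and a
complementary edge, otherwise each `S k` consists of pieces of `b k ^ 2` outside `J`.
-/

open Filter Finset Function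
open scoped RealInnerProductSpace

universe u v

theorem exists_monochromatic_finset {C : Type u} [Finite C] (r : C → ℕ) :
    ∃ m, ∀ {α : Type v} [LinearOrder α] (V : Finset α) (f : α → α → C), m ≤ #V →
      ∃ c, ∃ W ⊆ V, #W = r c ∧ ∀ x ∈ W, ∀ y ∈ W, x < y → f x y = c := by
  classical
  have := Fintype.ofFinite C
  induction r using WellFoundedLT.induction with | ind r ih
  by_cases hr : ∃ c, r c = 0
  · obtain ⟨c, hc⟩ := hr
    exact ⟨0, fun V f _ ↦ ⟨c, ∅, by simp [hc]⟩⟩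
  have hlt (c : C) : update r c (r c - 1) < r :=
    update_lt_self_iff.2 (Nat.sub_one_lt fun h ↦ hr ⟨c, h⟩)
  choose m hm using fun c ↦ ih _ (hlt c)
  -- Many pairs at the minimum `x` share a colour `c`; among their other ends it suffices to find
  -- one element fewer in colour `c`, because `x` can be added.
  refine ⟨Fintype.card C * ∑ c, m c + 2, fun {α} _ V f hV ↦ ?_⟩
  have hne : V.Nonempty := card_pos.1 (by lia)
  set x := V.min' hne
  obtain ⟨c, -, hc⟩ := exists_lt_card_fiber_of_mul_lt_card_of_maps_to
    (s := V.erase x) (t := univ) (f := f x) (n := ∑ c, m c) (fun _ _ ↦ mem_univ _)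
    (by rw [card_erase_of_mem (V.min'_mem hne), card_univ]; lia)
  obtain ⟨d, W, hWV, hW, hd⟩ :=
    hm c _ f ((single_le_sum_of_canonicallyOrdered (mem_univ c)).trans hc.le)
  have hW' (y) (hy : y ∈ W) : y ∈ V ∧ x < y ∧ f x y = c := by
    have := mem_filter.1 (hWV hy)
    exact ⟨mem_of_mem_erase this.1, V.min'_lt_of_mem_erase_min' hne this.1, this.2⟩
  obtain rfl | hdc := eq_or_ne d c
  · have hx : x ∉ W := fun hx ↦ (hW' x hx).2.1.false
    refine ⟨d, insert x W, insert_subset (V.min'_mem hne) fun y hy ↦ (hW' y hy).1, ?_, ?_⟩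
    · rw [card_insert_of_notMem hx, hW, update_self]
      exact Nat.sub_one_add_one fun h ↦ hr ⟨d, h⟩
    · grind
  · exact ⟨d, W, fun y hy ↦ (hW' y hy).1, by rw [hW, update_of_ne hdc], hd⟩

theorem exists_orderEmbedding_monochromatic (C : Type u) [Finite C] (k : ℕ) :
    ∃ m, ∀ f : Fin m → Fin m → C,
      ∃ t : Fin k ↪o Fin m, ∃ c, ∀ p q, p < q → f (t p) (t q) = c := by
  obtain ⟨m, hm⟩ := exists_monochromatic_finset fun _ : C ↦ k
  refine ⟨m, fun f ↦ ?_⟩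
  obtain ⟨c, W, -, hW, hc⟩ := hm univ f (by simp)
  exact ⟨W.orderEmbOfFin hW, c, fun p q hpq ↦
    hc _ (orderEmbOfFin_mem ..) _ (orderEmbOfFin_mem ..) ((W.orderEmbOfFin hW).strictMono hpq)⟩

theorem exists_orderEmbedding_monochromatic_pi (ι : Type u) [Finite ι] (k : ℕ)
    (C : Type v) [Finite C] : ∃ m, ∀ f : (ι → Fin m) → (ι → Fin m) → C,
      ∃ t : ι → Fin k ↪o Fin m, ∃ c, ∀ p q : ι → Fin k, (∀ i, p i < q i) →
        f (fun i ↦ t i (p i)) (fun i ↦ t i (q i)) = c := by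
  induction ι using Finite.induction_empty_option with
  | of_equiv e ih =>
    obtain ⟨m, hm⟩ := ih
    refine ⟨m, fun f ↦ ?_⟩
    obtain ⟨t, c, hc⟩ := hm fun x y ↦ f (x ∘ e.symm) (y ∘ e.symm)
    refine ⟨t ∘ e.symm, c, fun p q hpq ↦ ?_⟩
    simpa [comp_def] using hc (p ∘ e) (q ∘ e) fun i ↦ hpq _
  | h_empty =>
    exact ⟨0, fun f ↦ ⟨isEmptyElim, f isEmptyElim isEmptyElim, fun p q _ ↦
      congrArg₂ f (Subsingleton.elim ..) (Subsingleton.elim ..)⟩⟩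
  | @h_option ι _ ih =>
    obtain ⟨m₁, h₁⟩ := ih
    obtain ⟨m₂, h₂⟩ :=
      exists_orderEmbedding_monochromatic ((ι → Fin m₁) → (ι → Fin m₁) → C) k
    let e₁ : Fin m₁ ↪o Fin (max m₁ m₂) := Fin.castLEOrderEmb (le_max_left ..)
    let e₂ : Fin m₂ ↪o Fin (max m₁ m₂) := Fin.castLEOrderEmb (le_max_right ..)
    refine ⟨max m₁ m₂, fun f ↦ ?_⟩
    let glue (a : Fin m₂) (x : ι → Fin m₁) : Option ι → Fin (max m₁ m₂) :=
      fun o ↦ o.elim (e₂ a) fun i ↦ e₁ (x i)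
    -- Uniformizing the new coordinate leaves a colouring `g` of the pairs in the old ones.
    obtain ⟨t₂, g, hg⟩ := h₂ fun a b x y ↦ f (glue a x) (glue b y)
    obtain ⟨t₁, c, hc⟩ := h₁ g
    let t (o : Option ι) : Fin k ↪o Fin (max m₁ m₂) :=
      o.elim (t₂.trans e₂) fun i ↦ (t₁ i).trans e₁
    have ht (p : Option ι → Fin k) : (fun o ↦ t o (p o)) =
        glue (t₂ (p none)) fun i ↦ t₁ i (p (some i)) := by
      ext (_ | i) <;> rfl
    refine ⟨t, c, fun p q hpq ↦ ?_⟩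
    have hcolour := hc (fun i ↦ p (some i)) (fun i ↦ q (some i)) fun i ↦ hpq _
    rw [ht, ht, ← hcolour, ← hg _ _ (hpq none)]

/-- A colouring `φ` of the vertices of a cube, encoded as the finsets of coordinates at which the
upper endpoint is taken, is canonical with support `J` if the colour of a vertex determines exactly
its coordinates in `J`; this is the product analogue of the canonical colourings of Erdős and
Rado. -/
def IsCanonical {ι κ : Type*} [DecidableEq ι] (φ : Finset ι → κ) (J : Finset ι) : Prop :=
  ∀ u v, φ u = φ v ↔ u ∩ J = v ∩ J

/-- A colouring of the grid `3^ι` has uniform subcubes if the partition into colour classes which it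
induces on the vertices `u.piecewise q p` of a combinatorial cube with lower corner `p` and upper
corner `q` does not depend on the cube. -/
def HasUniformSubcubes {ι κ : Type*} [DecidableEq ι] (χ : (ι → Fin 3) → κ) : Prop :=
  ∃ E : Finset ι → Finset ι → Prop, ∀ p q : ι → Fin 3, (∀ i, p i < q i) → ∀ u v,
    χ (u.piecewise q p) = χ (v.piecewise q p) ↔ E u v

namespace HasUniformSubcubes

variable {ι κ : Type*} [DecidableEq ι] {χ : (ι → Fin 3) → κ} {u v : Finset ι} {i : ι}

theorem eq_insert_iff (h : HasUniformSubcubes χ) (hi : i ∉ u) :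
    χ (u.piecewise 1 0) = χ ((insert i u).piecewise 1 0) ↔ χ (update 1 i 0) = χ 1 := by
  obtain ⟨E, hE⟩ := h
  -- In the cube from `p` to `q` the vertices `u` and `insert i u` do not depend on `u`.
  let p : ι → Fin 3 := (insert i u).piecewise 0 1
  let q : ι → Fin 3 := (insert i u).piecewise 1 2
  have hpq (j) : p j < q j := by by_cases hj : j ∈ insert i u <;> simp [p, q, hj]
  have hu : u.piecewise q p = update (1 : ι → Fin 3) i 0 := by
    ext1 j
    by_cases hj : j = i
    · simp [p, piecewise, hj, hi]
    · by_cases hju : j ∈ u <;> simp [p, q, piecewise, hj, hju]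
  have hiu : (insert i u).piecewise q p = 1 := by
    ext1 j
    by_cases hj : j ∈ insert i u <;> simp only [p, q, piecewise, hj] <;> rfl
  rw [hE 0 1 (fun _ ↦ Fin.zero_lt_one), ← hE p q hpq, hu, hiu]

theorem eq_erase_of_eq (h : HasUniformSubcubes χ)
    (huv : χ (u.piecewise 1 0) = χ (v.piecewise 1 0)) (hu : i ∉ u) (hv : i ∈ v) :
    χ ((v.erase i).piecewise 1 0) = χ (v.piecewise 1 0) := by
  obtain ⟨E, hE⟩ := h
  let p : ι → Fin 3 := update 0 i 1
  let q : ι → Fin 3 := update 1 i 2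
  have h01 := hE 0 1 fun _ ↦ Fin.zero_lt_one
  have h02 := hE 0 q fun j ↦ by by_cases hj : j = i <;> simp [q, hj]
  have h12 := hE p q fun j ↦ by by_cases hj : j = i <;> simp [p, q, hj]
  -- Vertex `u` does not see the upper corner in coordinate `i`, so raising it there from `1` to `2`
  -- preserves the colour of `u`, hence also that of `v`.
  have hvq : χ (v.piecewise 1 0) = χ (v.piecewise q 0) := calc
    χ (v.piecewise 1 0) = χ (u.piecewise 1 0) := huv.symm
    _ = χ (u.piecewise q 0) := by
      congr 1; ext1 j; by_cases hj : j = i <;> simp_all [q, piecewise]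
    _ = χ (v.piecewise q 0) := by rwa [h02, ← h01]
  have hp : (v.erase i).piecewise q p = v.piecewise (1 : ι → Fin 3) 0 := by
    ext1 j; by_cases hj : j = i <;> simp_all [p, q, piecewise]
  have hq : v.piecewise q p = v.piecewise q (0 : ι → Fin 3) := by
    ext1 j; by_cases hj : j = i <;> simp_all [p, q, piecewise]
  rwa [h01, ← h12, hp, hq]

theorem eq_of_notMem_of_mem (h : HasUniformSubcubes χ)
    (huv : χ (u.piecewise 1 0) = χ (v.piecewise 1 0)) (hu : i ∉ u) (hv : i ∈ v) :
    χ (update 1 i 0) = χ 1 :=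
  (h.eq_insert_iff (notMem_erase i v)).1 <| by
    rw [insert_erase hv]
    exact h.eq_erase_of_eq huv hu hv

theorem eq_union (h : HasUniformSubcubes χ) (u : Finset ι) {T : Finset ι}
    (hT : ∀ i ∈ T, χ (update 1 i 0) = χ 1) :
    χ (u.piecewise 1 0) = χ ((u ∪ T).piecewise 1 0) := by
  induction T using Finset.induction_on with
  | empty => rw [union_empty]
  | insert i T _ ih =>
    rw [forall_mem_insert] at hT
    rw [ih hT.2, union_insert]
    by_cases hi : i ∈ u ∪ T
    · rw [insert_eq_of_mem hi]
    · exact (h.eq_insert_iff hi).2 hT.1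

theorem exists_isCanonical [Finite ι] (h : HasUniformSubcubes χ) :
    ∃ J, IsCanonical (fun u : Finset ι ↦ χ (u.piecewise 1 0)) J := by
  classical
  have := Fintype.ofFinite ι
  let J : Finset ι := {i | χ (update 1 i 0) ≠ χ 1}
  have hJ (i) : i ∉ J ↔ χ (update 1 i 0) = χ 1 := by simp [J]
  refine ⟨J, fun u v ↦ ⟨fun huv ↦ ?_, fun huv ↦ ?_⟩⟩
  · ext i
    have huv' := mt fun hi : i ∉ u ∧ i ∈ v ↦ (hJ i).2 (h.eq_of_notMem_of_mem huv hi.1 hi.2)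
    have hvu' := mt fun hi : i ∉ v ∧ i ∈ u ↦ (hJ i).2 (h.eq_of_notMem_of_mem huv.symm hi.1 hi.2)
    simp only [mem_inter]
    tauto
  · have hmem (i) : i ∈ J → (i ∈ u ↔ i ∈ v) := by
      simpa [and_congr_left_iff] using Finset.ext_iff.1 huv i
    have huv' (i) (hi : i ∈ v \ u) := (hJ i).1 fun hiJ ↦ by simp_all
    have hvu' (i) (hi : i ∈ u \ v) := (hJ i).1 fun hiJ ↦ by simp_all
    beta_reduce
    rw [h.eq_union u huv', h.eq_union v hvu', union_sdiff_self_eq_union,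
      union_sdiff_self_eq_union, union_comm]

end HasUniformSubcubes

theorem exists_isCanonical_subcube (ι : Type u) [Finite ι] [DecidableEq ι] :
    ∃ m, ∀ {κ : Type*} (χ : (ι → Fin m) → κ), ∃ a b : ι → Fin m, (∀ i, a i ≠ b i) ∧
      ∃ J, IsCanonical (fun u : Finset ι ↦ χ (u.piecewise b a)) J := by
  obtain ⟨m, hm⟩ := exists_orderEmbedding_monochromatic_pi ι 3 (Finset ι → Finset ι → Prop)
  refine ⟨m, fun χ ↦ ?_⟩
  obtain ⟨t, E, hE⟩ := hm fun x y u v ↦ χ (u.piecewise y x) = χ (v.piecewise y x)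
  have ht (p q : ι → Fin 3) (u : Finset ι) : (fun i ↦ t i (u.piecewise q p i)) =
      u.piecewise (fun i ↦ t i (q i)) (fun i ↦ t i (p i)) := by
    ext1 i; exact apply_ite (t i) ..
  have h : HasUniformSubcubes fun w : ι → Fin 3 ↦ χ fun i ↦ t i (w i) :=
    ⟨E, fun p q hpq u v ↦ by simp only [ht, ← hE p q hpq]⟩
  obtain ⟨J, hJ⟩ := h.exists_isCanonical
  simp only [ht] at hJ
  exact ⟨_, _, fun i ↦ (t i).injective.ne (by simp), J, hJ⟩

theorem monochromatic_image {α β κ : Type*} {f : α → β} {χ : β → κ} {X : Set α} :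
    Monochromatic χ (f '' X) ↔ Monochromatic (χ ∘ f) X := by
  simp [Monochromatic]

namespace IsCanonical

variable {ι κ α : Type*} [DecidableEq ι] {J : Finset ι} {S : α → Finset ι} {φ : Finset ι → κ}

theorem monochromatic_insert_range (h : IsCanonical φ J) (hS : ∀ a, Disjoint (S a) J) :
    Monochromatic φ (insert ∅ (Set.range S)) := by
  have h₀ (u) (hu : u ∈ insert ∅ (Set.range S)) : u ∩ J = ∅ := by
    obtain rfl | ⟨a, rfl⟩ := hu
    · exact empty_inter J
    · exact disjoint_iff_inter_eq_empty.1 (hS a)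
  exact fun u hu v hv ↦ (h u v).2 ((h₀ u hu).trans (h₀ v hv).symm)

theorem rainbowSet_insert_range (h : IsCanonical φ J) (hdisj : Pairwise (Disjoint on S))
    (hS : ∀ a, ¬Disjoint (S a) J) : RainbowSet φ (insert ∅ (Set.range S)) := by
  have hS' (a) : S a ∩ J ≠ ∅ := mt disjoint_iff_inter_eq_empty.2 (hS a)
  rintro _ (rfl | ⟨a, rfl⟩) _ (rfl | ⟨b, rfl⟩) huv
  · rfl
  · exact absurd ((h _ _).1 huv).symm (by simpa using hS' b)
  · exact absurd ((h _ _).1 huv) (by simpa using hS' a)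
  · obtain ⟨i, hi, hiJ⟩ := not_disjoint_iff.1 (hS a)
    have hib : i ∈ S b := (mem_inter.1 ((h _ _).1 huv ▸ mem_inter.2 ⟨hi, hiJ⟩)).1
    by_contra hne
    exact disjoint_left.1 (hdisj (ne_of_apply_ne S hne)) hi hib

end IsCanonical

section Geometry

variable {ι α E : Type*} [NormedAddCommGroup E] [InnerProductSpace ℝ E]

theorem inner_sum_sum_of_pairwise_inner_eq_zero [DecidableEq ι] {W : ι → E}
    (hW : Pairwise fun i j ↦ ⟪W i, W j⟫ = 0) (S T : Finset ι) :
    ⟪∑ i ∈ S, W i, ∑ i ∈ T, W i⟫ = ∑ i ∈ S ∩ T, ‖W i‖ ^ 2 := by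
  simp_rw [sum_inner, inner_sum, ← sum_ite_mem, ← real_inner_self_eq_norm_sq]
  refine sum_congr rfl fun i _ ↦ ?_
  rw [← sum_ite_eq T i fun j ↦ ⟪W i, W j⟫]
  refine sum_congr rfl fun j _ ↦ ?_
  split_ifs with hij
  · rfl
  · exact hW hij

theorem norm_sq_sum_of_pairwise_inner_eq_zero {W : ι → E}
    (hW : Pairwise fun i j ↦ ⟪W i, W j⟫ = 0) (S : Finset ι) :
    ‖∑ i ∈ S, W i‖ ^ 2 = ∑ i ∈ S, ‖W i‖ ^ 2 := by
  classical
  rw [← real_inner_self_eq_norm_sq, inner_sum_sum_of_pairwise_inner_eq_zero hW, inter_self]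

theorem isCopy_insert_range_add {n N : ℕ} {v : Fin n → EuclideanSpace ℝ (Fin N)}
    (hv : Pairwise fun j k ↦ ⟪v j, v k⟫ = 0) (hv₀ : ∀ k, v k ≠ 0)
    (x : EuclideanSpace ℝ (Fin N)) :
    IsCopy (insert 0 (Set.range fun k ↦ EuclideanSpace.single k ‖v k‖))
      (insert x (Set.range fun k ↦ x + v k)) := by
  let Y (k : Fin n) : EuclideanSpace ℝ (Fin N) := ‖v k‖⁻¹ • v k
  have hY : Orthonormal ℝ Y :=
    ⟨fun k ↦ norm_smul_inv_norm (𝕜 := ℝ) (hv₀ k), fun j k hjk ↦ by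
      simp [Y, inner_smul_left, inner_smul_right, hv hjk]⟩
  let B := EuclideanSpace.basisFun (Fin n) ℝ
  let L := B.toBasis.constr ℝ Y
  have hL (k) : L (EuclideanSpace.single k ‖v k‖) = v k := by
    have hk : EuclideanSpace.single k ‖v k‖ = ‖v k‖ • B.toBasis k := by ext; simp [B]
    rw [hk, map_smul, Module.Basis.constr_basis, smul_inv_smul₀ (norm_ne_zero_iff.2 (hv₀ k))]
  have hLB : Orthonormal ℝ (L ∘ B.toBasis) := by
    convert hY
    ext1 k
    exact B.toBasis.constr_basis ..
  let f := L.isometryOfOrthonormal (by simp) hLB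
  refine ⟨fun y ↦ x + f y, (IsometryEquiv.addLeft x).isometry.comp f.isometry, ?_⟩
  have hf (k) : f (EuclideanSpace.single k ‖v k‖) = v k := hL k
  simp only [Set.image_insert_eq, map_zero, add_zero, ← Set.range_comp, comp_def, hf]

/-- The vertex `w` of a product of regular simplices, one for each `i`, spanned by the vectors
`r i • e (i, l)` for varying `l`. -/
def simplexProdVertex [Fintype ι] (e : ι × α → E) (r : ι → ℝ) (w : ι → α) : E :=
  ∑ i, r i • e (i, w i)

theorem simplexProdVertex_piecewise [Fintype ι] [DecidableEq ι] (e : ι × α → E) (r : ι → ℝ)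
    (a b : ι → α) (u : Finset ι) :
    simplexProdVertex e r (u.piecewise b a) =
      simplexProdVertex e r a + ∑ i ∈ u, r i • (e (i, b i) - e (i, a i)) := by
  simp_rw [simplexProdVertex]
  rw [← Fintype.sum_ite_mem u, ← sum_add_distrib]
  refine sum_congr rfl fun i _ ↦ ?_
  by_cases hi : i ∈ u <;> simp [hi, smul_sub]

theorem exists_isCanonical_box (ι : Type u) [Finite ι] [DecidableEq ι] {s : ι → ℝ}
    (hs : ∀ i, 0 ≤ s i) :
    ∃ m, ∀ {E : Type*} [NormedAddCommGroup E] [InnerProductSpace ℝ E] {e : ι × Fin m → E},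
      Orthonormal ℝ e → ∀ {κ : Type*} (χ : E → κ), ∃ (x : E) (W : ι → E),
        (Pairwise fun i j ↦ ⟪W i, W j⟫ = 0) ∧ (∀ i, ‖W i‖ ^ 2 = s i) ∧
        ∃ J, IsCanonical (fun u : Finset ι ↦ χ (x + ∑ i ∈ u, W i)) J := by
  have := Fintype.ofFinite ι
  obtain ⟨m, hm⟩ := exists_isCanonical_subcube ι
  refine ⟨m, fun {E} _ _ {e} he _ χ ↦ ?_⟩
  let r (i : ι) : ℝ := √(s i / 2)
  obtain ⟨a, b, hab, J, hJ⟩ := hm fun w ↦ χ (simplexProdVertex e r w)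
  simp only [simplexProdVertex_piecewise] at hJ
  refine ⟨_, fun i ↦ r i • (e (i, b i) - e (i, a i)), fun i j hij ↦ ?_, fun i ↦ ?_, J, hJ⟩
  · simp [inner_smul_left, inner_smul_right, inner_sub_left, inner_sub_right,
      he.inner_eq_zero, hij]
  · have hba : ‖e (i, b i) - e (i, a i)‖ ^ 2 = 2 := by
      rw [norm_sub_sq_real, he.norm_eq_one, he.norm_eq_one,
        he.inner_eq_zero (by simp [(hab i).symm])]
      norm_num
    rw [norm_smul, mul_pow, hba, Real.norm_eq_abs, sq_abs, Real.sq_sqrt (by linarith [hs i])]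
    ring

theorem isCopy_image_box {n N : ℕ} {W : ι → EuclideanSpace ℝ (Fin N)}
    (hW : Pairwise fun i j ↦ ⟪W i, W j⟫ = 0) {S : Fin n → Finset ι} (hS : Pairwise (Disjoint on S))
    {b : Fin n → ℝ} (hb : ∀ k, 0 < b k) (hsum : ∀ k, ∑ i ∈ S k, ‖W i‖ ^ 2 = b k ^ 2)
    (x : EuclideanSpace ℝ (Fin N)) :
    IsCopy (insert 0 (Set.range fun k ↦ EuclideanSpace.single k (b k)))
      ((fun u : Finset ι ↦ x + ∑ i ∈ u, W i) '' insert ∅ (Set.range S)) := by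
  classical
  have hnorm (k) : ‖∑ i ∈ S k, W i‖ = b k := by
    rw [← sq_eq_sq₀ (norm_nonneg _) (hb k).le, norm_sq_sum_of_pairwise_inner_eq_zero hW, hsum]
  have horth : Pairwise fun j k ↦ ⟪∑ i ∈ S j, W i, ∑ i ∈ S k, W i⟫ = 0 := fun j k hjk ↦
    (inner_sum_sum_of_pairwise_inner_eq_zero hW _ _).trans <| by
      rw [disjoint_iff_inter_eq_empty.1 (hS hjk), sum_empty]
  have hcopy := isCopy_insert_range_add horth (fun k ↦ norm_pos_iff.1 (hnorm k ▸ hb k)) x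
  simpa only [hnorm, Set.image_insert_eq, ← Set.range_comp, comp_def, sum_empty, add_zero]
    using hcopy

end Geometry

section Selection

variable {A M : Type*} {c : A → ℝ} {k : ℕ}

theorem exists_forall_div_le [Finite A] (hc : ∀ a, 0 < c a) :
    ∃ k : ℕ, k ≠ 0 ∧ ∀ a b, c a / k ≤ c b :=
  ((eventually_ne_atTop 0).and <| eventually_all.2 fun a ↦ eventually_all.2 fun b ↦
    (tendsto_const_div_atTop_nhds_zero_nat (c a)).eventually_le_const (hc b)).exists

/-- Squared edge lengths of a box in which every `c a` can be assembled in two ways: from `k` of the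
edges `(a, l)`, each of weight `c a / k`, or, for any choice of `d`, from one edge `(d, l)` and
the complementary edge `(d, a)`. -/
noncomputable def splitWeight (c : A → ℝ) (k : ℕ) : (A × M) ⊕ (A × A) → ℝ :=
  Sum.elim (fun p ↦ c p.1 / k) (fun p ↦ c p.2 - c p.1 / k)

theorem splitWeight_nonneg (hc : ∀ a, 0 ≤ c a) (hk : ∀ a b, c a / k ≤ c b)
    (i : (A × M) ⊕ (A × A)) : 0 ≤ splitWeight c k i := by
  rcases i with ⟨a, l⟩ | ⟨a, b⟩
  · exact div_nonneg (hc a) k.cast_nonneg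
  · exact sub_nonneg.2 (hk a b)

variable [DecidableEq A] [DecidableEq M] [Fintype M] {J : Finset ((A × M) ⊕ (A × A))}

theorem exists_disjoint_splitWeight (hk : k ≠ 0) (hJ : ∀ a, k ≤ #{l | Sum.inl (a, l) ∉ J}) :
    ∃ S : A → Finset ((A × M) ⊕ (A × A)), Pairwise (Disjoint on S) ∧
      (∀ a, ∑ i ∈ S a, splitWeight c k i = c a) ∧ ∀ a, Disjoint (S a) J := by
  choose U hUJ hU using fun a ↦ exists_subset_card_eq (hJ a)
  refine ⟨fun a ↦ (U a).image fun l ↦ Sum.inl (a, l), fun a b hab ↦ ?_, fun a ↦ ?_, fun a ↦ ?_⟩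
  · simp [onFun, disjoint_left, hab.symm]
  · rw [sum_image (by simp)]
    simp [splitWeight, hU, mul_div_cancel₀, hk]
  · simpa [disjoint_left, subset_iff] using hUJ a

theorem exists_not_disjoint_splitWeight [Fintype A] {a : A}
    (hJ : Fintype.card A ≤ #{l | Sum.inl (a, l) ∈ J}) :
    ∃ S : A → Finset ((A × M) ⊕ (A × A)), Pairwise (Disjoint on S) ∧
      (∀ b, ∑ i ∈ S b, splitWeight c k i = c b) ∧ ∀ b, ¬Disjoint (S b) J := by
  obtain ⟨g⟩ : Nonempty (A ↪ {l // Sum.inl (a, l) ∈ J}) :=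
    Embedding.nonempty_of_card_le (by rwa [Fintype.card_subtype])
  refine ⟨fun b ↦ {Sum.inl (a, (g b).1), Sum.inr (a, b)}, fun b d hbd ↦ ?_, fun b ↦ ?_, fun b ↦ ?_⟩
  · simp [onFun, Subtype.val_inj, hbd.symm]
  · rw [sum_pair (by simp)]
    exact add_sub_cancel _ _
  · simp [(g b).2]

theorem exists_weight_forall_disjoint_or_forall_not_disjoint {A : Type u} [Finite A] {c : A → ℝ}
    (hc : ∀ a, 0 < c a) :
    ∃ (ι : Type u) (_ : Finite ι) (s : ι → ℝ), (∀ i, 0 ≤ s i) ∧ ∀ J : Finset ι,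
      ∃ S : A → Finset ι, Pairwise (Disjoint on S) ∧ (∀ a, ∑ i ∈ S a, s i = c a) ∧
        ((∀ a, Disjoint (S a) J) ∨ ∀ a, ¬Disjoint (S a) J) := by
  classical
  have := Fintype.ofFinite A
  obtain ⟨k, hk₀, hk⟩ := exists_forall_div_le hc
  refine ⟨(A × Fin (k + Fintype.card A)) ⊕ (A × A), inferInstance, splitWeight c k,
    splitWeight_nonneg (fun a ↦ (hc a).le) hk, fun J ↦ ?_⟩
  by_cases hJ : ∀ a, k ≤ #{l | Sum.inl (a, l) ∉ J}
  · obtain ⟨S, hS, hsum, hSJ⟩ := exists_disjoint_splitWeight (c := c) hk₀ hJ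
    exact ⟨S, hS, hsum, .inl hSJ⟩
  · push Not at hJ
    obtain ⟨a, ha⟩ := hJ
    have hcard := card_filter_add_card_filter_not (s := univ)
      fun l : Fin (k + Fintype.card A) ↦ Sum.inl (a, l) ∈ J
    rw [card_univ, Fintype.card_fin] at hcard
    obtain ⟨S, hS, hsum, hSJ⟩ :=
      exists_not_disjoint_splitWeight (c := c) (k := k) (a := a) (J := J) (by lia)
    exact ⟨S, hS, hsum, .inr hSJ⟩

end Selection

/-- **Right-angled simplices are canonically Ramsey.** For positive reals
`b₁, …, bₙ`, the configuration `{0, b₁e₁, …, bₙeₙ} ⊆ ℝⁿ` is canonically Ramsey. -/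
theorem rightAngledSimplex_canonicallyRamsey (n : ℕ) (hn : 0 < n)
    (b : Fin n → ℝ) (hb : ∀ i, 0 < b i) :
    CanonicallyRamsey
      (insert (0 : EuclideanSpace ℝ (Fin n))
        (Set.range fun i => EuclideanSpace.single i (b i))) := by
  classical
  obtain ⟨ι, _, s, hs, hselect⟩ :=
    exists_weight_forall_disjoint_or_forall_not_disjoint fun i ↦ pow_pos (hb i) 2
  have := Fintype.ofFinite ι
  obtain ⟨m, hm⟩ := exists_isCanonical_box ι hs
  -- The spare coordinate makes the dimension positive.
  let e : ι × Fin m ↪ Fin (Fintype.card (ι × Fin m) + 1) :=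
    (Fintype.equivFin _).toEmbedding.trans Fin.castSuccEmb
  refine ⟨Fintype.card (ι × Fin m) + 1, Nat.succ_pos _, fun κ χ ↦ ?_⟩
  obtain ⟨x, W, hW, hWs, J, hJ⟩ :=
    hm ((EuclideanSpace.basisFun _ ℝ).orthonormal.comp e e.injective) χ
  obtain ⟨S, hS, hsum, hSJ⟩ := hselect J
  refine ⟨_, isCopy_image_box hW hS hb (by simpa only [hWs] using hsum) x, ?_⟩
  exact hSJ.imp (fun h ↦ monochromatic_image.2 (hJ.monochromatic_insert_range h))
    (fun h ↦ (hJ.rainbowSet_insert_range hS h).image_of_comp)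
end
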